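/- Given λ_i[n] (i = 1,…,N) defined by λ_i[n] - λ_{i+1}[n] = p^{ni/2} a_i[n] for i = 1,…,N-1 and ∑_{i=1}^N p^{(1-i)n} λ_i[n] = 0, where [a_i[n], a_j[m]] = (1/n)·(1-qⁿ)(p^{A_{ij}n/2} - p^{-A_{ij}n/2})(1-(p/q)ⁿ)/(1-pⁿ)·δ_{n,-m} with (A_{ij}) the Cartan matrix of sl_N, the commutators are [λ_i[n], λ_i[m]] = -(1/n)·(1-qⁿ)(1-p^{n(N-1)})(1-(p/q)ⁿ)/(1-p^{nN})·δ_{n,-m} and, for i < j, [λ_i[n], λ_j[m]] = (1/n)·(1-qⁿ)(1-pⁿ)(1-(p/q)ⁿ)/(1-p^{nN})·p^{-n}·δ_{n,-m}. -/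

import Mathlib

/-- The Cartan matrix of sl_N (indices 1,…,N-1): A_{ii} = 2, A_{ij} = -1 for |i-j| = 1,
A_{ij} = 0 otherwise. -/
def cartan (i j : ℕ) : ℤ := if i = j then 2 else if i + 1 = j ∨ j + 1 = i then -1 else 0

/-!
Write `t = s ^ n = p ^ (n / 2)`. At the mode `n` the vectors `λ_i[n]` solve a linear system with
data `a_i[n]`, and that system has at most one solution because its weights `p ^ ((1 - i) n)` do not
sum to zero. The system is preserved by linear maps, so brackets are computed one argument at a time
by guessing a solution. Pairing with `a_i[n]` gives the sparse answer
`[a_i[n], λ_j[-n]] = t ^ (-i) (t ^ (-2) δ_{j,i+1} - δ_{j,i})`, up to the central factor. This in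
turn is the datum of the system solved by `i ↦ [λ_i[n], λ_j[-n]]`: the successive differences fix
it up to a constant independent of `i`, and the weighted sum fixes the constant. The brackets of
modes `n` and `m ≠ -n` vanish because they solve the homogeneous system.
-/

section Coefficients

variable {K : Type*} [Field K]

lemma zpow_one_sub_natCast_succ (P : K) (k : ℕ) : P ^ (1 - ((k + 1 : ℕ) : ℤ)) = P⁻¹ ^ k := by
  rw [show 1 - ((k + 1 : ℕ) : ℤ) = -k by push_cast; ring, zpow_neg, zpow_natCast, inv_pow]

lemma sq_zpow_eq {p s : K} (hs : s ^ 2 = p) (n : ℤ) : (s ^ n) ^ 2 = p ^ n := by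
  rw [← hs, ← zpow_natCast, ← zpow_natCast, zpow_comm]

/-- The total weight of the normalisation `∑ i, p ^ ((1 - i) n) λ_i[n] = 0`, where `P = p ^ n`. -/
def weightSum (N : ℕ) (P : K) : K :=
  ∑ i ∈ Finset.Icc 1 N, P ^ (1 - (i : ℤ))

lemma weightSum_one (N : ℕ) : weightSum N (1 : K) = N := by
  simp [weightSum]

lemma weightSum_eq_geom_sum (N : ℕ) (P : K) :
    weightSum N P = ∑ k ∈ Finset.range N, P⁻¹ ^ k := by
  induction N with
  | zero => simp [weightSum]
  | succ k ih =>
    rw [Finset.sum_range_succ, ← ih, weightSum, weightSum, Finset.sum_Icc_succ_top (by lia),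
      zpow_one_sub_natCast_succ]

lemma weightSum_mul_one_sub_inv (N : ℕ) (P : K) :
    weightSum N P * (1 - P⁻¹) = 1 - (P ^ N)⁻¹ := by
  rw [weightSum_eq_geom_sum, geom_sum_mul_neg, inv_pow]

lemma weightSum_ne_zero {N : ℕ} {P : K} (hPN : P ^ N ≠ 1) : weightSum N P ≠ 0 := by
  intro h
  have hinv : 1 - (P ^ N)⁻¹ = 0 := by rw [← weightSum_mul_one_sub_inv, h, zero_mul]
  exact hPN (inv_eq_one.1 (sub_eq_zero.1 hinv).symm)

lemma weightSum_zpow_ne_zero {N : ℕ} {p : K} (hN : (N : K) ≠ 0)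
    (hpN : ∀ n : ℤ, n ≠ 0 → p ^ (n * N) ≠ 1) (n : ℤ) : weightSum N (p ^ n) ≠ 0 := by
  rcases eq_or_ne n 0 with rfl | hn
  · rwa [zpow_zero, weightSum_one]
  · exact weightSum_ne_zero (by simpa only [zpow_mul, zpow_natCast] using hpN n hn)

lemma inv_weightSum {N : ℕ} {P : K} (hP : P ≠ 0) (hPN : P ^ N ≠ 1) :
    (weightSum N P)⁻¹ = (1 - P) * P⁻¹ * P ^ N / (1 - P ^ N) := by
  have hsub : 1 - P ^ N ≠ 0 := sub_ne_zero.2 hPN.symm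
  have hsum := weightSum_mul_one_sub_inv N P
  refine inv_eq_of_mul_eq_one_right ?_
  calc
    _ = weightSum N P * (1 - P⁻¹) * (-P ^ N / (1 - P ^ N)) := by field_simp; ring
    _ = 1 := by rw [hsum]; field_simp; ring

/-- The coefficient of the central factor in `[a_i[n], λ_j[-n]]`, where `t = s ^ n`. -/
def mixedCoeff (t : K) (i j : ℕ) : K :=
  (t ^ i)⁻¹ * ((if j = i + 1 then (t ^ 2)⁻¹ else 0) - if j = i then 1 else 0)

lemma zpow_cartan_sub_zpow_neg_div {t : K} (ht : t ≠ 0) (ht1 : t ^ 2 ≠ 1) (i j : ℕ) :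
    (t ^ cartan i j - t ^ (-cartan i j)) / (1 - t ^ 2) =
      if i = j then -(1 + (t ^ 2)⁻¹) else if i + 1 = j ∨ j + 1 = i then t⁻¹ else 0 := by
  have hsub : 1 - t ^ 2 ≠ 0 := sub_ne_zero.2 ht1.symm
  rw [cartan, div_eq_iff hsub]
  split_ifs
  · rw [zpow_neg, zpow_ofNat]
    field_simp
    ring
  · rw [neg_neg, zpow_one, zpow_neg_one]
    field_simp
  · simp

/-- The coefficient of the central factor in `[λ_i[n], λ_j[-n]]`, where `P = p ^ n`. The second
summand has the required differences in `i` and the weighted sum `-1`; the first summand is the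
constant that cancels this sum. -/
def lambdaCoeff (N : ℕ) (P : K) (i j : ℕ) : K :=
  (weightSum N P)⁻¹ + if i < j then P⁻¹ - 1 else if i = j then -1 else 0

lemma lambdaCoeff_self {N : ℕ} {P : K} (hP : P ≠ 0) (hPN : P ^ N ≠ 1) (i : ℕ) :
    lambdaCoeff N P i i = -(1 - P ^ ((N : ℤ) - 1)) / (1 - P ^ N) := by
  have hsub : 1 - P ^ N ≠ 0 := sub_ne_zero.2 hPN.symm
  rw [lambdaCoeff, inv_weightSum hP hPN, if_neg (lt_irrefl i), if_pos rfl, zpow_sub_one₀ hP,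
    zpow_natCast]
  field_simp
  ring

lemma lambdaCoeff_of_lt {N : ℕ} {P : K} (hP : P ≠ 0) (hPN : P ^ N ≠ 1) {i j : ℕ} (hij : i < j) :
    lambdaCoeff N P i j = (1 - P) / (1 - P ^ N) * P⁻¹ := by
  have hsub : 1 - P ^ N ≠ 0 := sub_ne_zero.2 hPN.symm
  rw [lambdaCoeff, inv_weightSum hP hPN, if_pos hij]
  field_simp
  ring

lemma sum_zpow_mul_ite {P : K} (hP : P ≠ 0) {j : ℕ} (hj : 1 ≤ j) (k : ℕ) :
    ∑ i ∈ Finset.Icc 1 k,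
        P ^ (1 - (i : ℤ)) * (if i < j then P⁻¹ - 1 else if i = j then -1 else 0) =
      (if k < j then (P ^ k)⁻¹ else 0) - 1 := by
  induction k with
  | zero => simp [show 0 < j from hj]
  | succ k ih =>
    rw [Finset.sum_Icc_succ_top (by lia), ih, zpow_one_sub_natCast_succ, inv_pow, pow_succ]
    rcases lt_trichotomy (k + 1) j with hlt | rfl | hgt
    · rw [if_pos (by lia), if_pos hlt, if_pos hlt]
      field_simp
      ring
    · rw [if_pos (by lia), if_neg (by lia), if_pos rfl, if_neg (by lia)]
      ring
    · rw [if_neg (by lia), if_neg (by lia), if_neg (by lia), if_neg (by lia)]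
      ring

end Coefficients

/-- The linear system that determines `x i = λ_i[n]` from `a i = a_i[n]` at a single mode `n`, where
`t = s ^ n = p ^ (n / 2)`. -/
structure IsLambdaSystem {K M : Type*} [Field K] [AddCommGroup M] [Module K M] (N : ℕ) (t : K)
    (a x : ℕ → M) : Prop where
  sub_succ : ∀ i ∈ Set.Ico 1 N, x i - x (i + 1) = t ^ i • a i
  sum_smul : ∑ i ∈ Finset.Icc 1 N, (t ^ 2) ^ (1 - (i : ℤ)) • x i = 0

section Solutions

variable {K : Type*} [Field K] {N : ℕ} {t : K}

lemma isLambdaSystem_mixedCoeff (ht : t ≠ 0) (ht1 : t ^ 2 ≠ 1) {i : ℕ} (hi : i ∈ Set.Ico 1 N) :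
    IsLambdaSystem N t⁻¹ (fun j => (t ^ cartan i j - t ^ (-cartan i j)) / (1 - t ^ 2))
      (mixedCoeff t i) where
  sub_succ j _ := by
    rw [smul_eq_mul, zpow_cartan_sub_zpow_neg_div ht ht1, mixedCoeff, mixedCoeff]
    obtain rfl | rfl | rfl | ⟨hij, hij', hji'⟩ :
      i = j ∨ j = i + 1 ∨ i = j + 1 ∨ i ≠ j ∧ j ≠ i + 1 ∧ i ≠ j + 1 := by lia
    · simp only [Nat.left_eq_add, one_ne_zero, ↓reduceIte, Nat.add_eq_left, inv_pow]
      field_simp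
      ring
    · simp only [↓reduceIte, Nat.add_eq_left, one_ne_zero, show i + 1 + 1 ≠ i by lia,
        Nat.left_eq_add, or_false, inv_pow]
      field_simp
      ring
    · simp only [show j ≠ j + 1 + 1 by lia, ↓reduceIte, Nat.left_eq_add, one_ne_zero,
        Nat.add_eq_left, or_true, inv_pow]
      field_simp
      ring
    · simp [hij.symm, hij', hji'.symm, hij, hij'.symm]
  sum_smul := by
    have hmem : i ∈ Finset.Icc 1 N := Finset.mem_Icc.2 ⟨hi.1, hi.2.le⟩
    have hmem' : i + 1 ∈ Finset.Icc 1 N := Finset.mem_Icc.2 ⟨by lia, hi.2⟩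
    have hpow : (t⁻¹ ^ 2) ^ (1 - ((i + 1 : ℕ) : ℤ)) * (t ^ 2)⁻¹ =
        (t⁻¹ ^ 2) ^ (1 - (i : ℤ)) := by
      rw [← inv_pow, ← zpow_add_one₀ (pow_ne_zero 2 (inv_ne_zero ht))]
      congr 1
      push_cast
      ring
    simp only [mixedCoeff, smul_eq_mul, mul_left_comm _ (t ^ i)⁻¹, mul_sub, mul_ite, mul_zero,
      mul_one, Finset.sum_sub_distrib, Finset.sum_ite_eq', if_pos hmem, if_pos hmem', hpow]
    rw [mul_comm, sub_self]

lemma isLambdaSystem_lambdaCoeff (ht : t ≠ 0) (hw : weightSum N (t ^ 2) ≠ 0) {j : ℕ}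
    (hj : j ∈ Set.Icc 1 N) :
    IsLambdaSystem N t (fun i => mixedCoeff t i j) (fun i => lambdaCoeff N (t ^ 2) i j) where
  sub_succ i _ := by
    have hcancel : t ^ i * (t ^ i)⁻¹ = 1 := mul_inv_cancel₀ (pow_ne_zero i ht)
    rw [mixedCoeff, smul_eq_mul, ← mul_assoc, hcancel, one_mul, lambdaCoeff, lambdaCoeff,
      add_sub_add_left_eq_sub]
    split_ifs <;> first | lia | ring
  sum_smul := by
    simp only [smul_eq_mul, lambdaCoeff, mul_add, Finset.sum_add_distrib]
    rw [← Finset.sum_mul, ← weightSum, mul_inv_cancel₀ hw,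
      sum_zpow_mul_ite (pow_ne_zero 2 ht) hj.1, if_neg (not_lt.2 hj.2)]
    ring

end Solutions

namespace IsLambdaSystem

variable {K M M' V : Type*} [Field K] [AddCommGroup M] [Module K M] [AddCommGroup M'] [Module K M']
  [AddCommGroup V] [Module K V] {N : ℕ} {t u : K}

lemma map {a x : ℕ → M} (h : IsLambdaSystem N t a x) (f : M →ₗ[K] V) :
    IsLambdaSystem N t (fun i => f (a i)) (fun i => f (x i)) where
  sub_succ i hi := by rw [← map_sub, h.sub_succ i hi, map_smul]
  sum_smul := by simp only [← map_smul, ← map_sum, h.sum_smul, map_zero]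

lemma smul_const {a x : ℕ → K} (h : IsLambdaSystem N t a x) (v : V) :
    IsLambdaSystem N t (fun i => a i • v) (fun i => x i • v) :=
  h.map (LinearMap.toSpanSingleton K V v)

lemma zero : IsLambdaSystem N t (fun _ => (0 : M)) (fun _ => 0) where
  sub_succ _ _ := by simp
  sum_smul := by simp

lemma eqOn {a a' x x' : ℕ → M} (h : IsLambdaSystem N t a x) (h' : IsLambdaSystem N t a' x')
    (hw : weightSum N (t ^ 2) ≠ 0) (ha : Set.EqOn a a' (Set.Ico 1 N)) :
    Set.EqOn x x' (Set.Icc 1 N) := by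
  have hstep : ∀ i ∈ Set.Ico 1 N, x i - x' i = x (i + 1) - x' (i + 1) := fun i hi => by
    rw [sub_eq_sub_iff_sub_eq_sub, h.sub_succ i hi, h'.sub_succ i hi, ha hi]
  have hconst : ∀ i, 1 ≤ i → i ≤ N → x i - x' i = x 1 - x' 1 := fun i hi => by
    induction i, hi using Nat.le_induction with
    | base => exact fun _ => rfl
    | succ i hi ih => exact fun hiN => (hstep i ⟨hi, hiN⟩).symm.trans (ih (by lia))
  have hsum : weightSum N (t ^ 2) • (x 1 - x' 1) = 0 := calc
    _ = ∑ i ∈ Finset.Icc 1 N, (t ^ 2) ^ (1 - (i : ℤ)) • (x i - x' i) := by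
      rw [weightSum, Finset.sum_smul]
      refine Finset.sum_congr rfl fun i hi => ?_
      rw [hconst i (Finset.mem_Icc.1 hi).1 (Finset.mem_Icc.1 hi).2]
    _ = 0 := by
      simp only [smul_sub, Finset.sum_sub_distrib, h.sum_smul, h'.sum_smul, sub_zero]
  intro i hi
  rw [← sub_eq_zero, hconst i hi.1 hi.2]
  exact (smul_eq_zero_iff_right hw).1 hsum

variable (B : M →ₗ[K] M' →ₗ[K] V) {a x : ℕ → M} {b y : ℕ → M'}

lemma bilin_apply_eq_zero (hx : IsLambdaSystem N t a x) (hy : IsLambdaSystem N u b y)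
    (ht : weightSum N (t ^ 2) ≠ 0) (hu : weightSum N (u ^ 2) ≠ 0)
    (hB : ∀ i ∈ Set.Ico 1 N, ∀ j ∈ Set.Ico 1 N, B (a i) (b j) = 0) {i j : ℕ}
    (hi : i ∈ Set.Icc 1 N) (hj : j ∈ Set.Icc 1 N) : B (x i) (y j) = 0 := by
  have hmixed : ∀ i ∈ Set.Ico 1 N, B (a i) (y j) = 0 := fun i hi =>
    (hy.map (B (a i))).eqOn zero hu (hB i hi) hj
  exact (hx.map (B.flip (y j))).eqOn zero ht hmixed hi

theorem bilin_apply_eq_smul (ht : t ≠ 0) (htN : (t ^ 2) ^ N ≠ 1) {v : V}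
    (hx : IsLambdaSystem N t a x) (hy : IsLambdaSystem N t⁻¹ b y)
    (hB : ∀ i ∈ Set.Ico 1 N, ∀ j ∈ Set.Ico 1 N,
      B (a i) (b j) = ((t ^ cartan i j - t ^ (-cartan i j)) / (1 - t ^ 2)) • v)
    {i j : ℕ} (hi : i ∈ Set.Icc 1 N) (hj : j ∈ Set.Icc 1 N) :
    B (x i) (y j) = lambdaCoeff N (t ^ 2) i j • v := by
  have ht1 : t ^ 2 ≠ 1 := fun h => htN (by rw [h, one_pow])
  have hw : weightSum N (t ^ 2) ≠ 0 := weightSum_ne_zero htN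
  have hw' : weightSum N (t⁻¹ ^ 2) ≠ 0 :=
    weightSum_ne_zero (by simpa only [inv_pow, ne_eq, inv_eq_one])
  have hmixed : ∀ i ∈ Set.Ico 1 N, B (a i) (y j) = mixedCoeff t i j • v := fun i hi =>
    (hy.map (B (a i))).eqOn ((isLambdaSystem_mixedCoeff ht ht1 hi).smul_const v) hw' (hB i hi) hj
  exact (hx.map (B.flip (y j))).eqOn ((isLambdaSystem_lambdaCoeff ht hw hj).smul_const v) hw
    hmixed hi

theorem bilin_apply_eq_ite {p s : K} {n m : ℤ} {v : V} (hN : (N : K) ≠ 0) (hs0 : s ≠ 0)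
    (hs : s ^ 2 = p) (hpN : ∀ n : ℤ, n ≠ 0 → p ^ (n * N) ≠ 1) (hn : n ≠ 0)
    (hx : IsLambdaSystem N (s ^ n) a x) (hy : IsLambdaSystem N (s ^ m) b y)
    (hB : ∀ i ∈ Set.Ico 1 N, ∀ j ∈ Set.Ico 1 N, B (a i) (b j) = if n = -m then
      ((s ^ (cartan i j * n) - s ^ (-(cartan i j * n))) / (1 - p ^ n)) • v else 0)
    {i j : ℕ} (hi : i ∈ Set.Icc 1 N) (hj : j ∈ Set.Icc 1 N) :
    B (x i) (y j) = if n = -m then lambdaCoeff N (p ^ n) i j • v else 0 := by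
  have hw (k : ℤ) : weightSum N ((s ^ k) ^ 2) ≠ 0 := by
    rw [sq_zpow_eq hs]; exact weightSum_zpow_ne_zero hN hpN k
  split_ifs with hnm
  · have hm : s ^ m = (s ^ n)⁻¹ := by rw [hnm, zpow_neg, inv_inv]
    have hpow : ((s ^ n) ^ 2) ^ N ≠ 1 := by
      simpa only [sq_zpow_eq hs, zpow_mul, zpow_natCast] using hpN n hn
    rw [← sq_zpow_eq hs]
    refine bilin_apply_eq_smul B (zpow_ne_zero n hs0) hpow hx (hm ▸ hy) (fun i hi j hj => ?_) hi hj
    simpa only [if_pos hnm, sq_zpow_eq hs, ← zpow_mul, neg_mul, mul_comm n] using hB i hi j hj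
  · exact hx.bilin_apply_eq_zero B hy (hw n) (hw m)
      (fun i hi j hj => (hB i hi j hj).trans (if_neg hnm)) hi hj

end IsLambdaSystem

/-- The bilinear map `B` plays the role of the bracket and `z n` that of the central element
`(1/n)·(1-qⁿ)(1-(p/q)ⁿ)`. -/
theorem lambda_commutators_general {K M V : Type*} [Field K] [AddCommGroup M] [Module K M]
    [AddCommGroup V] [Module K V] (B : M →ₗ[K] M →ₗ[K] V) {N : ℕ}
    (hN : (N : K) ≠ 0) {p s : K} (hp : p ≠ 0) (hs : s ^ 2 = p)
    (hpN : ∀ n : ℤ, n ≠ 0 → p ^ (n * N) ≠ 1) (z : ℤ → V) (a lam : ℕ → ℤ → M)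
    (ha : ∀ i j, 1 ≤ i → i ≤ N - 1 → 1 ≤ j → j ≤ N - 1 → ∀ n m : ℤ, n ≠ 0 →
      B (a i n) (a j m) = if n = -m then
        ((s ^ (cartan i j * n) - s ^ (-(cartan i j * n))) / (1 - p ^ n)) • z n else 0)
    (hlam1 : ∀ i, 1 ≤ i → i ≤ N - 1 → ∀ n : ℤ,
      lam i n - lam (i + 1) n = s ^ (n * i) • a i n)
    (hlam2 : ∀ n : ℤ, ∑ i ∈ Finset.Icc 1 N, p ^ ((1 - (i : ℤ)) * n) • lam i n = 0) :
    (∀ i, 1 ≤ i → i ≤ N → ∀ n m : ℤ, n ≠ 0 →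
      B (lam i n) (lam i m) = if n = -m then
        (-(1 - p ^ (n * ((N : ℤ) - 1))) / (1 - p ^ (n * N))) • z n else 0) ∧
    (∀ i j, 1 ≤ i → i < j → j ≤ N → ∀ n m : ℤ, n ≠ 0 →
      B (lam i n) (lam j m) = if n = -m then
        ((1 - p ^ n) / (1 - p ^ (n * N)) * p ^ (-n)) • z n else 0) := by
  have hs0 : s ≠ 0 := (pow_ne_zero_iff two_ne_zero).1 (hs ▸ hp)
  have hpow (n : ℤ) (hn : n ≠ 0) : (p ^ n) ^ N ≠ 1 := by
    simpa only [zpow_mul, zpow_natCast] using hpN n hn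
  have hsys (n : ℤ) : IsLambdaSystem N (s ^ n) (a · n) (lam · n) := by
    refine ⟨fun i hi => ?_, ?_⟩
    · rw [hlam1 i hi.1 (Nat.le_sub_one_of_lt hi.2), zpow_mul, zpow_natCast]
    · simpa only [sq_zpow_eq hs, mul_comm _ n, zpow_mul] using hlam2 n
  have hB_lam (i j : ℕ) (hi : i ∈ Set.Icc 1 N) (hj : j ∈ Set.Icc 1 N) (n m : ℤ) (hn : n ≠ 0) :
      B (lam i n) (lam j m) = if n = -m then lambdaCoeff N (p ^ n) i j • z n else 0 :=
    (hsys n).bilin_apply_eq_ite B hN hs0 hs hpN hn (hsys m) (fun i hi j hj =>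
      ha i j hi.1 (Nat.le_sub_one_of_lt hi.2) hj.1 (Nat.le_sub_one_of_lt hj.2) n m hn) hi hj
  refine ⟨fun i hi hiN n m hn => ?_, fun i j hi hij hjN n m hn => ?_⟩
  · rw [hB_lam i i ⟨hi, hiN⟩ ⟨hi, hiN⟩ n m hn,
      lambdaCoeff_self (zpow_ne_zero n hp) (hpow n hn)]
    simp only [zpow_mul, zpow_natCast]
  · rw [hB_lam i j ⟨hi, by lia⟩ ⟨by lia, hjN⟩ n m hn,
      lambdaCoeff_of_lt (zpow_ne_zero n hp) (hpow n hn) hij]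
    simp only [zpow_mul, zpow_natCast, zpow_neg]

/-- Given generators a_i[n] of the Heisenberg algebra H_{q,p}(sl_N) with
[a_i[n], a_j[m]] = (1/n)·(1-qⁿ)(p^{A_{ij}n/2} - p^{-A_{ij}n/2})(1-(p/q)ⁿ)/(1-pⁿ)·δ_{n,-m},
and λ_i[n] defined by λ_i[n] - λ_{i+1}[n] = p^{ni/2} a_i[n] and ∑_{i=1}^N p^{(1-i)n} λ_i[n] = 0,
the commutators are
[λ_i[n], λ_i[m]] = -(1/n)·(1-qⁿ)(1-p^{n(N-1)})(1-(p/q)ⁿ)/(1-p^{nN})·δ_{n,-m} and, for i < j,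
[λ_i[n], λ_j[m]] = (1/n)·(1-qⁿ)(1-pⁿ)(1-(p/q)ⁿ)/(1-p^{nN})·p^{-n}·δ_{n,-m}.
Here s is a fixed square root of p, so p^{c/2} = s^c. -/
theorem lambda_commutators (N : ℕ) (hN : 2 ≤ N) (R : Type*) [Ring R] [Algebra ℂ R]
    (p q s : ℂ) (hp : p ≠ 0) (hq : q ≠ 0) (hs : s ^ 2 = p)
    (hp1 : ∀ n : ℤ, n ≠ 0 → p ^ n ≠ 1) (hpN : ∀ n : ℤ, n ≠ 0 → p ^ (n * N) ≠ 1)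
    (a lam : ℕ → ℤ → R)
    (ha : ∀ i j, 1 ≤ i → i ≤ N - 1 → 1 ≤ j → j ≤ N - 1 → ∀ n m : ℤ, n ≠ 0 →
      a i n * a j m - a j m * a i n =
        if n = -m then
          algebraMap ℂ R (1 / (n : ℂ) * ((1 - q ^ n) *
            (s ^ (cartan i j * n) - s ^ (-(cartan i j * n))) * (1 - (p / q) ^ n) /
            (1 - p ^ n)))
        else 0)
    (hlam1 : ∀ i, 1 ≤ i → i ≤ N - 1 → ∀ n : ℤ,
      lam i n - lam (i + 1) n = algebraMap ℂ R (s ^ (n * i)) * a i n)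
    (hlam2 : ∀ n : ℤ,
      ∑ i ∈ Finset.Icc 1 N, algebraMap ℂ R (p ^ ((1 - (i : ℤ)) * n)) * lam i n = 0) :
    (∀ i, 1 ≤ i → i ≤ N → ∀ n m : ℤ, n ≠ 0 →
      lam i n * lam i m - lam i m * lam i n =
        if n = -m then
          algebraMap ℂ R (-(1 / (n : ℂ)) * ((1 - q ^ n) * (1 - p ^ (n * ((N : ℤ) - 1))) *
            (1 - (p / q) ^ n) / (1 - p ^ (n * N))))
        else 0) ∧
    (∀ i j, 1 ≤ i → i < j → j ≤ N → ∀ n m : ℤ, n ≠ 0 →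
      lam i n * lam j m - lam j m * lam i n =
        if n = -m then
          algebraMap ℂ R (1 / (n : ℂ) * ((1 - q ^ n) * (1 - p ^ n) * (1 - (p / q) ^ n) /
            (1 - p ^ (n * N))) * p ^ (-n))
        else 0) := by
  simp only [← Algebra.smul_def] at hlam1 hlam2
  refine (lambda_commutators_general (LinearMap.mul ℂ R - (LinearMap.mul ℂ R).flip)
    (Nat.cast_ne_zero.2 (by lia)) hp hs hpN
    (fun n => algebraMap ℂ R (1 / (n : ℂ) * ((1 - q ^ n) * (1 - (p / q) ^ n)))) a lam
    (fun i j hi hiN hj hjN n m hn => (ha i j hi hiN hj hjN n m hn).trans ?_) hlam1 hlam2).imp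
    (fun hself i hi hiN n m hn => (hself i hi hiN n m hn).trans ?_)
    (fun hlt i j hi hij hjN n m hn => (hlt i j hi hij hjN n m hn).trans ?_)
  all_goals
    rw [Algebra.smul_def, ← map_mul]
    congr 2
    ring
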